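/- Let d ≥ 2, let Ω ⊂ ℝ^d be a nonempty bounded open set, and let F, a₀, a₁ be symmetric real d×d matrices with a₀ ≠ a₁ and a := a₁ − a₀. Then the infimum, taken over all v ∈ C_c^∞(Ω; ℝ^d), of ∫_Ω dist²(F + ∇^sym v(x), {a₀, a₁}) dx equals |Ω| · min_{θ ∈ [0,1]} ( ‖F − a_θ‖² + θ(1−θ)·min_{ξ ∈ S^{d−1}} ( ‖a‖² − 2‖aξ‖² + ⟨aξ, ξ⟩² ) ), where ∇^sym v(x) := (Dv(x) + Dv(x)ᵀ)/2 is the symmetrized Jacobian and |Ω| the Lebesgue measure of Ω. (Both the minimum over the unit sphere S^{d−1} and the minimum over θ ∈ [0,1] are attained.) -/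

import Mathlib

open MeasureTheory

/-- Squared Frobenius norm of a matrix. -/
def frob2 {d : ℕ} (M : Matrix (Fin d) (Fin d) ℝ) : ℝ := ∑ i, ∑ j, (M i j) ^ 2

/-- The symmetrized Jacobian of `v` at `x`, entry `(i,j)` is `(∂ⱼ vᵢ + ∂ᵢ vⱼ)/2`. -/
noncomputable def symJacobian {d : ℕ} (v : (Fin d → ℝ) → (Fin d → ℝ)) (x : Fin d → ℝ) :
    Matrix (Fin d) (Fin d) ℝ :=
  Matrix.of fun i j =>
    (fderiv ℝ v x (Pi.single j 1) i + fderiv ℝ v x (Pi.single i 1) j) / 2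

/-!
Write `a = a₁ - a₀` and `H` for the least squared distance of `a` to a symmetrized rank-one matrix
`b ⊙ ξ`, `|ξ| = 1`.

*Lower bound.* For a test field `v` let `S ⊆ Ω` be the phase where `a₁` is the closer well,
`θ = |S| / |Ω|` and `f = 1_S - θ 1_Ω`. The strain `F + ∇ˢʸᵐ v - a₀ - 1_S a` is
`(F - a_θ) + (∇ˢʸᵐ v - f a)`, whose second part has mean zero, so the energy is
`|Ω| ‖F - a_θ‖² + ∫ ‖∇ˢʸᵐ v - f a‖²`. The Fourier transform of `∇ˢʸᵐ v` at `k` is a multiple of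
`v̂(k) ⊙ k`, so Plancherel's theorem gives
`∫ ‖∇ˢʸᵐ v - f a‖² ≥ H ∫ f² = |Ω| θ (1 - θ) H`.

*Upper bound.* Take `ξ` and `b` optimal for `H`, and a smooth periodic `u` whose derivative is close
to a function with values `1 - θ` and `-θ` on volume fractions `θ` and `1 - θ`. The fields
`x ↦ φ(x) u(N ξ·x + t) b / N` laminate between the two wells, where `φ` is a cutoff. Averaging their
energy over the phase `t` gives the volume average of the laminate without any weak-convergence
argument, and some phase does at least as well as the average.
-/

open Filter Topology Matrix TopologicalSpace
open scoped Real ContDiff Distributions SchwartzMap FourierTransform LineDeriv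

section Algebra

variable {d : ℕ} {a : Matrix (Fin d) (Fin d) ℝ} {H : ℝ}

/-- The quantity `‖a‖² - 2‖aξ‖² + ⟨aξ, ξ⟩²`. For symmetric `a` and unit `ξ` it is the squared
Frobenius distance of `a` to `{b ⊙ ξ | b ∈ ℝᵈ}`; see `frob2_symProd_sub_eq_add`. -/
def rankOneDistSq (a : Matrix (Fin d) (Fin d) ℝ) (ξ : Fin d → ℝ) : ℝ :=
  frob2 a - 2 * (∑ i, (a.mulVec ξ i) ^ 2) + (∑ i, a.mulVec ξ i * ξ i) ^ 2

/-- The symmetrized rank-one matrix `b ⊙ ξ = (b ⊗ ξ + ξ ⊗ b) / 2`. -/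
noncomputable def symProd (b ξ : Fin d → ℝ) : Matrix (Fin d) (Fin d) ℝ :=
  Matrix.of fun i j => (b i * ξ j + b j * ξ i) / 2

/-- The amplitude `b = 2aξ - ⟨aξ, ξ⟩ξ` for which `b ⊙ ξ` is the orthogonal projection of a
symmetric matrix `a` to `{b ⊙ ξ | b ∈ ℝᵈ}`, when `ξ` is a unit vector. -/
def bestAmplitude (a : Matrix (Fin d) (Fin d) ℝ) (ξ : Fin d → ℝ) : Fin d → ℝ :=
  (2 : ℝ) • (a *ᵥ ξ) - (a *ᵥ ξ ⬝ᵥ ξ) • ξ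

lemma frob2_nonneg (A : Matrix (Fin d) (Fin d) ℝ) : 0 ≤ frob2 A := by
  unfold frob2
  positivity

lemma continuous_frob2 : Continuous (frob2 : Matrix (Fin d) (Fin d) ℝ → ℝ) := by
  unfold frob2
  fun_prop

lemma frob2_smul (c : ℝ) (A : Matrix (Fin d) (Fin d) ℝ) : frob2 (c • A) = c ^ 2 * frob2 A := by
  simp only [frob2, Matrix.smul_apply, smul_eq_mul, mul_pow, Finset.mul_sum]

lemma continuous_symProd (b : Fin d → ℝ) : Continuous (symProd b) :=
  continuous_matrix fun i j => by
    simp only [symProd, Matrix.of_apply]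
    fun_prop

lemma symProd_smul (c : ℝ) (b ξ : Fin d → ℝ) : symProd b (c • ξ) = c • symProd b ξ := by
  ext i j
  simp only [symProd, Matrix.of_apply, Matrix.smul_apply, Pi.smul_apply, smul_eq_mul]
  ring

lemma smul_symProd (c : ℝ) (b ξ : Fin d → ℝ) : symProd (c • b) ξ = c • symProd b ξ := by
  ext i j
  simp only [symProd, Matrix.of_apply, Matrix.smul_apply, Pi.smul_apply, smul_eq_mul]
  ring

lemma rankOneDistSq_eq_dotProduct (a : Matrix (Fin d) (Fin d) ℝ) (ξ : Fin d → ℝ) :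
    rankOneDistSq a ξ = frob2 a - 2 * (a *ᵥ ξ ⬝ᵥ a *ᵥ ξ) + (a *ᵥ ξ ⬝ᵥ ξ) ^ 2 := by
  simp only [rankOneDistSq, dotProduct, sq]

lemma rankOneDistSq_smul (s : ℝ) (a : Matrix (Fin d) (Fin d) ℝ) (ξ : Fin d → ℝ) :
    rankOneDistSq (s • a) ξ = s ^ 2 * rankOneDistSq a ξ := by
  simp only [rankOneDistSq_eq_dotProduct, frob2_smul, smul_mulVec, smul_dotProduct,
    dotProduct_smul, smul_eq_mul]
  ring

lemma continuous_rankOneDistSq (a : Matrix (Fin d) (Fin d) ℝ) :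
    Continuous (rankOneDistSq a) := by
  have hmulVec : Continuous fun ξ : Fin d → ℝ => a *ᵥ ξ :=
    Continuous.matrix_mulVec continuous_const continuous_id
  simp only [funext (rankOneDistSq_eq_dotProduct a)]
  exact (continuous_const.sub (continuous_const.mul (hmulVec.dotProduct hmulVec))).add
    ((hmulVec.dotProduct continuous_id).pow 2)

lemma sum_symProd_mul (ha : a.IsSymm) (b ξ : Fin d → ℝ) :
    ∑ i, ∑ j, symProd b ξ i j * a i j = b ⬝ᵥ a *ᵥ ξ := by
  have hdir : ∑ i, ∑ j, b i * (a i j * ξ j) = b ⬝ᵥ a *ᵥ ξ := by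
    simp only [dotProduct, mulVec, Finset.mul_sum]
  have htranspose : ∑ i, ∑ j, b j * (a i j * ξ i) = b ⬝ᵥ a *ᵥ ξ := by
    rw [Finset.sum_comm, ← hdir]
    simp only [ha.apply]
  calc ∑ i, ∑ j, symProd b ξ i j * a i j
      = ∑ i, ∑ j, (b i * (a i j * ξ j) / 2 + b j * (a i j * ξ i) / 2) := by
        refine Finset.sum_congr rfl fun i _ => Finset.sum_congr rfl fun j _ => ?_
        simp only [symProd, Matrix.of_apply]
        ring
    _ = b ⬝ᵥ a *ᵥ ξ := by
        simp only [Finset.sum_add_distrib, ← Finset.sum_div, hdir, htranspose, add_halves]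

lemma frob2_symProd (b ξ : Fin d → ℝ) :
    frob2 (symProd b ξ) = ((b ⬝ᵥ b) * (ξ ⬝ᵥ ξ) + (b ⬝ᵥ ξ) ^ 2) / 2 := by
  have hsq : ∀ i j, symProd b ξ i j ^ 2 = (b i * b i * (ξ j * ξ j)) / 4
      + (ξ i * ξ i * (b j * b j)) / 4 + (b i * ξ i * (b j * ξ j)) / 2 := fun i j => by
    simp only [symProd, Matrix.of_apply]
    ring
  simp only [frob2, hsq, Finset.sum_add_distrib, ← Finset.sum_div, ← Finset.sum_mul_sum, sq,
    dotProduct]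
  ring

lemma frob2_sub (A B : Matrix (Fin d) (Fin d) ℝ) :
    frob2 (A - B) = frob2 A - 2 * ∑ i, ∑ j, A i j * B i j + frob2 B := by
  simp only [frob2, Matrix.sub_apply, sub_sq, Finset.sum_add_distrib, Finset.sum_sub_distrib,
    Finset.mul_sum, mul_assoc]

-- Pythagoras: `bestAmplitude a ξ ⊙ ξ - a` is orthogonal to every `q ⊙ ξ`.
lemma frob2_symProd_sub_eq_add (ha : a.IsSymm) (b : Fin d → ℝ) {ξ : Fin d → ℝ}
    (hξ : ∑ i, ξ i ^ 2 = 1) :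
    frob2 (symProd b ξ - a) =
      rankOneDistSq a ξ + frob2 (symProd (b - bestAmplitude a ξ) ξ) := by
  have hξ' : ξ ⬝ᵥ ξ = 1 := by simpa only [dotProduct, ← sq] using hξ
  rw [frob2_sub, sum_symProd_mul ha, frob2_symProd, frob2_symProd, rankOneDistSq_eq_dotProduct,
    bestAmplitude]
  simp only [sub_dotProduct, dotProduct_sub, smul_dotProduct, dotProduct_smul, smul_eq_mul,
    hξ', dotProduct_comm (a *ᵥ ξ) b, dotProduct_comm ξ b,
    dotProduct_comm ξ (a *ᵥ ξ)]
  ring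

lemma rankOneDistSq_le_frob2_symProd_sub (ha : a.IsSymm) (b : Fin d → ℝ) {ξ : Fin d → ℝ}
    (hξ : ∑ i, ξ i ^ 2 = 1) : rankOneDistSq a ξ ≤ frob2 (symProd b ξ - a) := by
  rw [frob2_symProd_sub_eq_add ha b hξ]
  exact le_add_of_nonneg_right (frob2_nonneg _)

lemma frob2_symProd_bestAmplitude_sub (ha : a.IsSymm) {ξ : Fin d → ℝ} (hξ : ∑ i, ξ i ^ 2 = 1) :
    frob2 (symProd (bestAmplitude a ξ) ξ - a) = rankOneDistSq a ξ := by
  rw [frob2_symProd_sub_eq_add ha _ hξ]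
  simp [frob2, symProd]

lemma exists_unit_symProd_eq {e : Fin d → ℝ} (he : ∑ i, e i ^ 2 = 1) (b k : Fin d → ℝ) :
    ∃ b' ξ : Fin d → ℝ, ∑ i, ξ i ^ 2 = 1 ∧ symProd b k = symProd b' ξ := by
  by_cases hk : k = 0
  · refine ⟨0, e, he, ?_⟩
    ext i j
    simp [symProd, hk]
  · set r := √(∑ i, k i ^ 2)
    have hr : r ^ 2 = ∑ i, k i ^ 2 := Real.sq_sqrt (Finset.sum_nonneg fun i _ => sq_nonneg _)
    have hr0 : r ≠ 0 := fun h => hk <| funext fun i => by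
      rw [h, zero_pow two_ne_zero, eq_comm,
        Finset.sum_eq_zero_iff_of_nonneg fun i _ => sq_nonneg _] at hr
      exact pow_eq_zero_iff two_ne_zero |>.1 (hr i (Finset.mem_univ i))
    refine ⟨r • b, r⁻¹ • k, ?_, ?_⟩
    · simp only [Pi.smul_apply, smul_eq_mul, mul_pow, ← Finset.mul_sum, ← hr]
      field_simp
    · rw [smul_symProd, symProd_smul, smul_inv_smul₀ hr0]

lemma mul_sq_le_frob2_symProd_sub (ha : a.IsSymm)
    (hH : IsLeast {h | ∃ ξ : Fin d → ℝ, ∑ i, ξ i ^ 2 = 1 ∧ h = rankOneDistSq a ξ} H)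
    (b k : Fin d → ℝ) (s : ℝ) : H * s ^ 2 ≤ frob2 (symProd b k - s • a) := by
  obtain ⟨e, he, -⟩ := hH.1
  obtain ⟨b', ξ, hξ, hbk⟩ := exists_unit_symProd_eq he b k
  calc H * s ^ 2 ≤ rankOneDistSq a ξ * s ^ 2 := by
        gcongr
        exact hH.2 ⟨ξ, hξ, rfl⟩
    _ = rankOneDistSq (s • a) ξ := by rw [rankOneDistSq_smul, mul_comm]
    _ ≤ frob2 (symProd b k - s • a) := by
        rw [hbk]
        exact rankOneDistSq_le_frob2_symProd_sub (ha.smul s) b' hξ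

lemma mul_norm_sq_le_sum_complex (ha : a.IsSymm)
    (hH : IsLeast {h | ∃ ξ : Fin d → ℝ, ∑ i, ξ i ^ 2 = 1 ∧ h = rankOneDistSq a ξ} H)
    (b : Fin d → ℂ) (k : Fin d → ℝ) (s : ℂ) :
    H * ‖s‖ ^ 2 ≤ ∑ i, ∑ j, ‖(b i * k j + b j * k i) / 2 - a i j * s‖ ^ 2 := by
  have hnorm : ∀ z : ℂ, ‖z‖ ^ 2 = z.re ^ 2 + z.im ^ 2 := fun z => by
    rw [Complex.sq_norm, Complex.normSq_apply, sq, sq]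
  have hre := mul_sq_le_frob2_symProd_sub ha hH (fun i => (b i).re) k s.re
  have him := mul_sq_le_frob2_symProd_sub ha hH (fun i => (b i).im) k s.im
  simp only [hnorm, mul_add, Finset.sum_add_distrib]
  refine add_le_add (hre.trans_eq ?_) (him.trans_eq ?_) <;>
  · unfold frob2 symProd
    congr! with i _ j
    simp
    ring

lemma exists_isLeast_rankOneDistSq [NeZero d] (a : Matrix (Fin d) (Fin d) ℝ) :
    ∃ H, IsLeast {h | ∃ ξ : Fin d → ℝ, ∑ i, ξ i ^ 2 = 1 ∧ h = rankOneDistSq a ξ} H := by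
  have himage : {h | ∃ ξ : Fin d → ℝ, ∑ i, ξ i ^ 2 = 1 ∧ h = rankOneDistSq a ξ} =
      rankOneDistSq a '' {ξ | ∑ i, ξ i ^ 2 = 1} := by
    ext
    simp only [Set.mem_image, Set.mem_ofPred_eq, eq_comm]
  have hbounded : {ξ : Fin d → ℝ | ∑ i, ξ i ^ 2 = 1} ⊆ Metric.closedBall 0 1 := fun ξ hξ => by
    rw [mem_closedBall_zero_iff, pi_norm_le_iff_of_nonneg zero_le_one]
    intro i
    rw [Real.norm_eq_abs, ← sq_le_one_iff_abs_le_one, ← Set.mem_ofPred.1 hξ]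
    exact Finset.single_le_sum (fun j _ => sq_nonneg (ξ j)) (Finset.mem_univ i)
  have hcompact : IsCompact {ξ : Fin d → ℝ | ∑ i, ξ i ^ 2 = 1} :=
    (isCompact_closedBall 0 1).of_isClosed_subset
      (isClosed_eq (by fun_prop) continuous_const) hbounded
  rw [himage]
  refine (hcompact.image (continuous_rankOneDistSq a)).exists_isLeast (Set.Nonempty.image _ ?_)
  exact ⟨Pi.single 0 1, by simp [Pi.single_apply, ite_pow]⟩

lemma exists_isLeast_laminate (F a₀ a₁ : Matrix (Fin d) (Fin d) ℝ) (H : ℝ) :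
    ∃ M, IsLeast {m : ℝ | ∃ θ ∈ Set.Icc (0 : ℝ) 1,
      m = frob2 (F - ((1 - θ) • a₀ + θ • a₁)) + θ * (1 - θ) * H} M := by
  have hcont : Continuous fun θ : ℝ =>
      frob2 (F - ((1 - θ) • a₀ + θ • a₁)) + θ * (1 - θ) * H :=
    (continuous_frob2.comp (by fun_prop)).add (by fun_prop)
  have himage : {m : ℝ | ∃ θ ∈ Set.Icc (0 : ℝ) 1,
      m = frob2 (F - ((1 - θ) • a₀ + θ • a₁)) + θ * (1 - θ) * H} =
      (fun θ => frob2 (F - ((1 - θ) • a₀ + θ • a₁)) + θ * (1 - θ) * H) '' Set.Icc 0 1 := by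
    ext
    simp only [Set.mem_image, Set.mem_ofPred_eq, eq_comm]
  rw [himage]
  exact (isCompact_Icc.image hcont).exists_isLeast ((Set.nonempty_Icc.2 zero_le_one).image _)

lemma laminate_frob2_eq (F a₀ a₁ P : Matrix (Fin d) (Fin d) ℝ) (θ : ℝ) :
    θ * frob2 (F + (1 - θ) • P - a₁) + (1 - θ) * frob2 (F + (-θ) • P - a₀) =
      frob2 (F - ((1 - θ) • a₀ + θ • a₁)) + θ * (1 - θ) * frob2 (P - (a₁ - a₀)) := by
  unfold frob2
  simp only [Finset.mul_sum, ← Finset.sum_add_distrib]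
  refine Finset.sum_congr rfl fun i _ => Finset.sum_congr rfl fun j _ => ?_
  simp only [Matrix.add_apply, Matrix.sub_apply, Matrix.smul_apply, smul_eq_mul]
  ring

end Algebra

section Cutoff

variable {E : Type*} [NormedAddCommGroup E] [NormedSpace ℝ E] [FiniteDimensional ℝ E]

lemma exists_testFunction_eq_one_on {Ω : Opens E} {K : Set E} (hK : IsCompact K)
    (hKΩ : K ⊆ Ω) : ∃ φ : 𝓓(Ω, ℝ), (∀ x, φ x ∈ Set.Icc 0 1) ∧ ∀ x ∈ K, φ x = 1 := by
  obtain ⟨V, hV, hKV, hVΩ, hVcompact⟩ := exists_open_between_and_isCompact_closure hK Ω.isOpen hKΩ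
  obtain ⟨φ, hφ, hrange, hsupport, hone⟩ := exists_contMDiff_support_eq_eq_one_iff
    (modelWithCornersSelf ℝ E) (n := ⊤) hV hK.isClosed hKV
  have htsupport : tsupport φ = closure V := by rw [tsupport, hsupport]
  exact ⟨⟨φ, hφ.contDiff, by rwa [HasCompactSupport, htsupport], by rwa [htsupport]⟩,
    fun x => hrange ⟨x, rfl⟩, fun x hx => (hone x).1 hx⟩

lemma exists_testFunction_tendsto_one (Ω : Opens E) :
    ∃ φ : ℕ → 𝓓(Ω, ℝ), (∀ k x, φ k x ∈ Set.Icc 0 1) ∧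
      ∀ x ∈ Ω, Tendsto (fun k => φ k x) atTop (𝓝 1) := by
  have : LocallyCompactSpace Ω := Ω.isOpen.locallyCompactSpace
  let K : CompactExhaustion Ω := default
  choose φ hφ hone using fun k => exists_testFunction_eq_one_on
    ((K.isCompact k).image continuous_subtype_val) (Subtype.coe_image_subset (Ω : Set E) (K k))
  refine ⟨φ, hφ, fun x hx => tendsto_atTop_of_eventually_const (i₀ := K.find ⟨x, hx⟩) ?_⟩
  exact fun k hk => hone k x ⟨⟨x, hx⟩, K.mem_iff_find_le.2 hk, rfl⟩

end Cutoff

section Oscillation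

lemma periodic_deriv {w : ℝ → ℝ} {T : ℝ} (hw : Function.Periodic w T) :
    Function.Periodic (deriv w) T := fun t => by
  rw [← deriv_comp_add_const, funext hw]

variable {E : Type*} [NormedAddCommGroup E] [NormedSpace ℝ E] {Ω : Opens E} {φ : 𝓓(Ω, ℝ)}
  {w : ℝ → ℝ} {T : ℝ} {g : StrongDual ℝ E → ℝ}

/-- The test function `x ↦ φ(x) n⁻¹ w(n ℓ(x) + t)`: a rapid oscillation of profile `w` in the
direction `ℓ`, with frequency `n` and phase `t`, localized by the cutoff `φ`. -/
noncomputable def oscillatingTest (φ : 𝓓(Ω, ℝ)) (hw : ContDiff ℝ ∞ w) (ℓ : StrongDual ℝ E)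
    (n t : ℝ) : 𝓓(Ω, ℝ) where
  toFun x := φ x * (n⁻¹ * w (n * ℓ x + t))
  contDiff' := φ.contDiff.mul (contDiff_const.mul (hw.comp (by fun_prop)))
  hasCompactSupport' := φ.hasCompactSupport.mul_right
  tsupport_subset' := tsupport_mul_subset_left.trans φ.tsupport_subset

/-- The gradient of `oscillatingTest φ hw ℓ ε⁻¹ t` as a function of the slow variable `x` and the
fast variable `s = ε⁻¹ ℓ(x) + t`, regarded as independent. -/
noncomputable def layeredGradient (φ : 𝓓(Ω, ℝ)) (w : ℝ → ℝ) (ℓ : StrongDual ℝ E) (ε : ℝ)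
    (x : E) (s : ℝ) : StrongDual ℝ E :=
  (φ x * deriv w s) • ℓ + (ε * w s) • fderiv ℝ φ x

lemma fderiv_oscillatingTest (φ : 𝓓(Ω, ℝ)) (hw : ContDiff ℝ ∞ w) (ℓ : StrongDual ℝ E)
    {n : ℝ} (hn : n ≠ 0) (t : ℝ) (x : E) :
    fderiv ℝ (oscillatingTest φ hw ℓ n t) x = layeredGradient φ w ℓ n⁻¹ x (n * ℓ x + t) := by
  have hphase : HasFDerivAt (fun x => n * ℓ x + t) (n • ℓ) x :=
    (ℓ.hasFDerivAt.const_mul n).add_const t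
  have hwave : HasFDerivAt (fun x => n⁻¹ * w (n * ℓ x + t))
      (n⁻¹ • deriv w (n * ℓ x + t) • n • ℓ) x :=
    ((hw.differentiable (by simp) _).hasDerivAt.comp_hasFDerivAt x hphase).const_mul n⁻¹
  have hφ : HasFDerivAt φ (fderiv ℝ φ x) x :=
    (φ.contDiff.differentiable (by simp) x).hasFDerivAt
  refine (hφ.mul hwave).fderiv.trans ?_
  rw [smul_comm (deriv w _) n ℓ, inv_smul_smul₀ hn, smul_smul, layeredGradient]

lemma continuous_layeredGradient (φ : 𝓓(Ω, ℝ)) (hw : ContDiff ℝ ∞ w) (ℓ : StrongDual ℝ E) :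
    Continuous fun p : ℝ × E × ℝ => layeredGradient φ w ℓ p.1 p.2.1 p.2.2 := by
  have hφ := φ.continuous
  have hφ' := φ.contDiff.continuous_fderiv (by simp)
  have hw₀ := hw.continuous
  have hw' := hw.continuous_deriv (by simp)
  unfold layeredGradient
  fun_prop

lemma exists_abs_layeredGradient_le (hg : Continuous g) (φ : 𝓓(Ω, ℝ)) (hw : ContDiff ℝ ∞ w)
    (hperiodic : Function.Periodic w T) (hT : 0 < T) (ℓ : StrongDual ℝ E) :
    ∃ C, ∀ ε ∈ Set.Icc (0 : ℝ) 1, ∀ x s, |g (layeredGradient φ w ℓ ε x s)| ≤ C := by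
  have hφ' : IsCompact (Set.range (fderiv ℝ φ)) := (φ.hasCompactSupport.fderiv ℝ).isCompact_range
    (φ.contDiff.continuous_fderiv (by simp))
  have hw' : IsCompact (Set.range (deriv w)) :=
    (periodic_deriv hperiodic).compact_of_continuous hT.ne' (hw.continuous_deriv (by simp))
  have hcompact := (isCompact_Icc (a := (0 : ℝ)) (b := 1)).prod <|
    ((φ.hasCompactSupport.isCompact_range φ.continuous).prod hφ').prod <|
      (hperiodic.compact_of_continuous hT.ne' hw.continuous).prod hw'
  have hcont : Continuous fun p : ℝ × (ℝ × StrongDual ℝ E) × ℝ × ℝ =>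
      g ((p.2.1.1 * p.2.2.2) • ℓ + (p.1 * p.2.2.1) • p.2.1.2) := by fun_prop
  obtain ⟨C, hC⟩ := hcompact.exists_bound_of_continuousOn hcont.continuousOn
  exact ⟨C, fun ε hε x s => hC (ε, (φ x, fderiv ℝ φ x), w s, deriv w s)
    ⟨hε, ⟨⟨x, rfl⟩, ⟨x, rfl⟩⟩, ⟨s, rfl⟩, ⟨s, rfl⟩⟩⟩

end Oscillation

section PhaseAverage

lemma period_mul_le_integral_intervalIntegral {X : Type*} [TopologicalSpace X]
    [MeasurableSpace X] [OpensMeasurableSpace X] [SecondCountableTopology X]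
    {μ : Measure X} [IsFiniteMeasure μ]
    {G : X → ℝ → ℝ} {c : X → ℝ} {T B C : ℝ} (hT : 0 ≤ T) (hG : Continuous (Function.uncurry G))
    (hc : Continuous c) (hbound : ∀ x t, |G x t| ≤ C) (hperiodic : ∀ x, Function.Periodic (G x) T)
    (hB : ∀ t, B ≤ ∫ x, G x (c x + t) ∂μ) (a : ℝ) :
    T * B ≤ ∫ x, (∫ t in a..a + T, G x t) ∂μ := by
  have : IsFiniteMeasure (volume.restrict (Set.uIoc a (a + T))) :=
    inferInstanceAs (IsFiniteMeasure (volume.restrict (Set.Ioc _ _)))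
  have hint : Integrable (fun p : ℝ × X => G p.2 (c p.2 + p.1))
      ((volume.restrict (Set.uIoc a (a + T))).prod μ) := by
    refine Integrable.of_bound (C := C) (Continuous.aestronglyMeasurable ?_)
      (.of_forall fun p => hbound _ _)
    exact hG.comp (continuous_snd.prodMk ((hc.comp continuous_snd).add continuous_fst))
  calc T * B = ∫ _ in a..a + T, B := by simp
    _ ≤ ∫ t in a..a + T, ∫ x, G x (c x + t) ∂μ :=
        intervalIntegral.integral_mono_on (by linarith) intervalIntegrable_const
          (intervalIntegrable_iff.2 hint.integral_prod_left) fun t _ => hB t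
    _ = ∫ x, (∫ t in a..a + T, G x (c x + t)) ∂μ := intervalIntegral_integral_swap hint
    _ = ∫ x, (∫ t in a..a + T, G x t) ∂μ := by
        congr! 2 with x
        rw [intervalIntegral.integral_comp_add_left (G x), ← add_assoc,
          (hperiodic x).intervalIntegral_add_eq _ a]

lemma tendsto_integral_intervalIntegral_of_bounded {X : Type*} [MeasurableSpace X]
    {μ : Measure X} [IsFiniteMeasure μ] {G : ℕ → X → ℝ → ℝ} {G' : X → ℝ → ℝ} {C a b : ℝ}
    (hG : ∀ n, StronglyMeasurable (Function.uncurry (G n))) (hbound : ∀ n x t, |G n x t| ≤ C)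
    (hlim : ∀ᵐ x ∂μ, ∀ t ∈ Set.uIoc a b, Tendsto (fun n => G n x t) atTop (𝓝 (G' x t))) :
    Tendsto (fun n => ∫ x, (∫ t in a..b, G n x t) ∂μ) atTop
      (𝓝 (∫ x, (∫ t in a..b, G' x t) ∂μ)) := by
  refine tendsto_integral_of_dominated_convergence (fun _ => C * |b - a|) (fun n => ?_)
    (integrable_const _) (fun n => .of_forall fun x => ?_) ?_
  · simp only [intervalIntegral.intervalIntegral_eq_integral_uIoc]
    have hinner : StronglyMeasurable fun x => ∫ t in Set.uIoc a b, G n x t :=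
      (hG n).integral_prod_right
    exact hinner.aestronglyMeasurable.const_smul (_ : ℝ)
  · exact intervalIntegral.norm_integral_le_of_norm_le_const fun t _ => hbound n x t
  · filter_upwards [hlim] with x hx
    refine intervalIntegral.tendsto_integral_filter_of_dominated_convergence (fun _ => C)
      (.of_forall fun n => ?_) (.of_forall fun n => .of_forall fun t _ => hbound n x t)
      intervalIntegrable_const (.of_forall hx)
    exact ((hG n).comp_measurable measurable_prodMk_left).aestronglyMeasurable

end PhaseAverage

section Laminate

variable {E : Type*} [NormedAddCommGroup E] [NormedSpace ℝ E] [FiniteDimensional ℝ E]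
  [MeasurableSpace E] [BorelSpace E] {μ : Measure E} [IsFiniteMeasure μ] {Ω : Opens E}
  {w : ℝ → ℝ} {T B : ℝ} {g : StrongDual ℝ E → ℝ}

lemma period_mul_le_integral_layeredGradient (hg : Continuous g)
    (hB : ∀ f : 𝓓(Ω, ℝ), B ≤ ∫ x, g (fderiv ℝ f x) ∂μ) (φ : 𝓓(Ω, ℝ)) (hw : ContDiff ℝ ∞ w)
    (hperiodic : Function.Periodic w T) (hT : 0 < T) (ℓ : StrongDual ℝ E) {n : ℝ} (hn : 1 ≤ n)
    (a : ℝ) : T * B ≤ ∫ x, (∫ t in a..a + T, g (layeredGradient φ w ℓ n⁻¹ x t)) ∂μ := by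
  obtain ⟨C, hC⟩ := exists_abs_layeredGradient_le hg φ hw hperiodic hT ℓ
  have hn₀ : 0 < n := one_pos.trans_le hn
  refine period_mul_le_integral_intervalIntegral (c := fun x => n * ℓ x)
    (G := fun x t => g (layeredGradient φ w ℓ n⁻¹ x t)) hT.le
    (hg.comp ((continuous_layeredGradient φ hw ℓ).comp (.prodMk_right n⁻¹)))
    (by fun_prop) (hC n⁻¹ ⟨inv_nonneg.2 hn₀.le, inv_le_one_of_one_le₀ hn⟩) (fun x s => ?_)
    (fun t => ?_) a
  · simp only [layeredGradient, hperiodic s, (periodic_deriv hperiodic) s]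
  · simpa only [fderiv_oscillatingTest φ hw ℓ hn₀.ne'] using hB (oscillatingTest φ hw ℓ n t)

lemma period_mul_le_integral_of_cutoff (hg : Continuous g)
    (hB : ∀ f : 𝓓(Ω, ℝ), B ≤ ∫ x, g (fderiv ℝ f x) ∂μ) (φ : 𝓓(Ω, ℝ)) (hw : ContDiff ℝ ∞ w)
    (hperiodic : Function.Periodic w T) (hT : 0 < T) (ℓ : StrongDual ℝ E) (a : ℝ) :
    T * B ≤ ∫ x, (∫ t in a..a + T, g ((φ x * deriv w t) • ℓ)) ∂μ := by
  obtain ⟨C, hC⟩ := exists_abs_layeredGradient_le hg φ hw hperiodic hT ℓ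
  have hfreq : ∀ n : ℕ, (1 : ℝ) ≤ n + 1 := fun n => by simp
  have hε : ∀ n : ℕ, ((n : ℝ) + 1)⁻¹ ∈ Set.Icc (0 : ℝ) 1 := fun n =>
    ⟨by positivity, inv_le_one_of_one_le₀ (hfreq n)⟩
  have hε_lim : Tendsto (fun n : ℕ => ((n : ℝ) + 1)⁻¹) atTop (𝓝 0) := by
    simpa only [one_div] using tendsto_one_div_add_atTop_nhds_zero_nat (𝕜 := ℝ)
  have hcont := hg.comp (continuous_layeredGradient φ hw ℓ)
  have hlim := tendsto_integral_intervalIntegral_of_bounded (μ := μ) (a := a) (b := a + T)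
    (G := fun n x t => g (layeredGradient φ w ℓ ((n : ℝ) + 1)⁻¹ x t))
    (G' := fun x t => g (layeredGradient φ w ℓ 0 x t))
    (fun n => (hcont.comp (.prodMk_right _)).stronglyMeasurable) (fun n => hC _ (hε n))
    (.of_forall fun x t _ => (hcont.comp (.prodMk_left (x, t))).tendsto 0 |>.comp
      hε_lim)
  simp only [layeredGradient, zero_mul, zero_smul, add_zero] at hlim
  exact ge_of_tendsto' hlim fun n =>
    period_mul_le_integral_layeredGradient hg hB φ hw hperiodic hT ℓ (hfreq n) a

lemma period_mul_le_intervalIntegral (hg : Continuous g) (hμ : ∀ᵐ x ∂μ, x ∈ Ω)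
    (hB : ∀ f : 𝓓(Ω, ℝ), B ≤ ∫ x, g (fderiv ℝ f x) ∂μ) (hw : ContDiff ℝ ∞ w)
    (hperiodic : Function.Periodic w T) (hT : 0 < T) (ℓ : StrongDual ℝ E) (a : ℝ) :
    T * B ≤ μ.real Set.univ * ∫ t in a..a + T, g (deriv w t • ℓ) := by
  obtain ⟨φ, hφ, hφ_lim⟩ := exists_testFunction_tendsto_one Ω
  have hw' := hw.continuous_deriv (by simp)
  have hgline : Continuous fun s : ℝ => g (s • ℓ) := by fun_prop
  obtain ⟨C, hC⟩ := ((isCompact_Icc (a := (0 : ℝ)) (b := 1)).prod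
    ((periodic_deriv hperiodic).compact_of_continuous hT.ne' hw')).exists_bound_of_continuousOn
      (hgline.comp continuous_mul).continuousOn
  have hlim := tendsto_integral_intervalIntegral_of_bounded (μ := μ) (a := a) (b := a + T)
    (G := fun k x t => g ((φ k x * deriv w t) • ℓ)) (G' := fun _ t => g ((1 * deriv w t) • ℓ))
    (fun k => by
      have hφk := (φ k).continuous
      exact (by fun_prop : Continuous fun p : E × ℝ =>
        g ((φ k p.1 * deriv w p.2) • ℓ)).stronglyMeasurable)
    (fun k x t => hC (φ k x, deriv w t) ⟨hφ k x, t, rfl⟩)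
    (hμ.mono fun x hx t _ => (hgline.tendsto _).comp ((hφ_lim x hx).mul_const _))
  simp only [one_mul, integral_const, smul_eq_mul] at hlim
  exact ge_of_tendsto' hlim fun k =>
    period_mul_le_integral_of_cutoff hg hB (φ k) hw hperiodic hT ℓ a

end Laminate

section Profile

variable {u : ℝ → ℝ} {T θ : ℝ}

lemma hasDerivAt_integral_zero (hu : Continuous u) (t : ℝ) :
    HasDerivAt (fun t => ∫ s in (0 : ℝ)..t, u s) (u t) t :=
  intervalIntegral.integral_hasDerivAt_right (hu.intervalIntegrable _ _)
    (hu.stronglyMeasurableAtFilter _ _) hu.continuousAt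

lemma contDiff_integral_zero (hu : ContDiff ℝ ∞ u) :
    ContDiff ℝ ∞ fun t => ∫ s in (0 : ℝ)..t, u s :=
  contDiff_infty_iff_deriv.2 ⟨fun t => (hasDerivAt_integral_zero hu.continuous t).differentiableAt,
    by rwa [funext fun t => (hasDerivAt_integral_zero hu.continuous t).deriv]⟩

lemma periodic_integral_zero (hu : Continuous u) (hperiodic : Function.Periodic u T) {a : ℝ}
    (hmean : ∫ t in a..a + T, u t = 0) :
    Function.Periodic (fun t => ∫ s in (0 : ℝ)..t, u s) T := fun t => by
  simp only
  rw [← intervalIntegral.integral_add_adjacent_intervals (hu.intervalIntegrable 0 t)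
    (hu.intervalIntegrable t (t + T)), hperiodic.intervalIntegral_add_eq t a, hmean, add_zero]

/-- A smooth `2π`-periodic function with values in `[0, 1]` which for large `k` approximates, on the
period `(-π, π]`, the indicator function of `(-πθ, πθ)`. -/
noncomputable def smoothPlateau (θ : ℝ) (k : ℕ) (t : ℝ) : ℝ :=
  Real.smoothTransition (k * (Real.cos t - Real.cos (π * θ)))

/-- The average of `smoothPlateau θ k` over a period. -/
noncomputable def plateauMean (θ : ℝ) (k : ℕ) : ℝ :=
  (2 * π)⁻¹ * ∫ t in -π..-π + 2 * π, smoothPlateau θ k t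

/-- The smoothed sawtooth profile: the primitive of `smoothPlateau θ k - plateauMean θ k`, whose
slope is for large `k` close to `1 - θ` on a fraction `θ` of each period and to `-θ` on the rest. -/
noncomputable def smoothSawtooth (θ : ℝ) (k : ℕ) (t : ℝ) : ℝ :=
  ∫ s in (0 : ℝ)..t, (smoothPlateau θ k s - plateauMean θ k)

lemma contDiff_smoothPlateau (θ : ℝ) (k : ℕ) : ContDiff ℝ ∞ (smoothPlateau θ k) :=
  Real.smoothTransition.contDiff.comp
    (contDiff_const.mul (Real.contDiff_cos.sub contDiff_const))

lemma periodic_smoothPlateau (θ : ℝ) (k : ℕ) : Function.Periodic (smoothPlateau θ k) (2 * π) :=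
  fun t => by rw [smoothPlateau, Real.cos_add_two_pi, smoothPlateau]

lemma smoothPlateau_mem_Icc (θ : ℝ) (k : ℕ) (t : ℝ) : smoothPlateau θ k t ∈ Set.Icc 0 1 :=
  ⟨Real.smoothTransition.nonneg _, Real.smoothTransition.le_one _⟩

lemma cos_lt_cos_iff_mem_Ioo (hθ : θ ∈ Set.Icc (0 : ℝ) 1) {t : ℝ} (ht : t ∈ Set.Ioc (-π) π) :
    Real.cos (π * θ) < Real.cos t ↔ t ∈ Set.Ioo (-(π * θ)) (π * θ) := by
  have hπθ : π * θ ∈ Set.Icc 0 π :=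
    ⟨mul_nonneg Real.pi_pos.le hθ.1, mul_le_of_le_one_right Real.pi_pos.le hθ.2⟩
  have habs : |t| ∈ Set.Icc 0 π := ⟨abs_nonneg t, abs_le.2 ⟨ht.1.le, ht.2⟩⟩
  rw [← Real.cos_abs t, Real.strictAntiOn_cos.lt_iff_gt hπθ habs, abs_lt, Set.mem_Ioo]

lemma tendsto_smoothPlateau (hθ : θ ∈ Set.Icc (0 : ℝ) 1) {t : ℝ} (ht : t ∈ Set.Ioc (-π) π) :
    Tendsto (fun k => smoothPlateau θ k t) atTop
      (𝓝 ((Set.Ioo (-(π * θ)) (π * θ)).indicator 1 t)) := by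
  by_cases hmem : t ∈ Set.Ioo (-(π * θ)) (π * θ)
  · have hcos := sub_pos.2 ((cos_lt_cos_iff_mem_Ioo hθ ht).2 hmem)
    rw [Set.indicator_of_mem hmem]
    refine tendsto_const_nhds.congr' ?_
    filter_upwards [(tendsto_natCast_atTop_atTop.atTop_mul_const hcos).eventually_ge_atTop 1]
      with k hk
    exact (Real.smoothTransition.one_of_one_le hk).symm
  · have hcos := sub_nonpos.2 (not_lt.1 (mt (cos_lt_cos_iff_mem_Ioo hθ ht).1 hmem))
    rw [Set.indicator_of_notMem hmem]
    exact tendsto_const_nhds.congr fun k => (Real.smoothTransition.zero_of_nonpos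
      (mul_nonpos_of_nonneg_of_nonpos k.cast_nonneg hcos)).symm

lemma intervalIntegral_comp_indicator (hθ : θ ∈ Set.Icc (0 : ℝ) 1) (h : ℝ → ℝ) :
    ∫ t in -π..-π + 2 * π, h ((Set.Ioo (-(π * θ)) (π * θ)).indicator 1 t) =
      2 * π * (θ * h 1 + (1 - θ) * h 0) := by
  have hπ := Real.pi_pos
  set A := Set.Ioo (-(π * θ)) (π * θ)
  have hsub : A ⊆ Set.Ioc (-π) (-π + 2 * π) := fun t ht =>
    ⟨by nlinarith [ht.1, hθ.2], by nlinarith [ht.2, hθ.2]⟩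
  have hvolume : volume.real A = 2 * π * θ := by
    rw [Real.volume_real_Ioo_of_le (by nlinarith [hθ.1])]
    ring
  have hsplit : ∀ t, h (A.indicator 1 t) = A.indicator (fun _ => h 1 - h 0) t + h 0 := fun t => by
    by_cases ht : t ∈ A <;> simp [ht]
  simp only [hsplit]
  rw [intervalIntegral.integral_of_le (by linarith),
    integral_add ((integrable_const _).indicator measurableSet_Ioo) (integrable_const _),
    setIntegral_indicator measurableSet_Ioo, Set.inter_eq_right.2 hsub, setIntegral_const,
    setIntegral_const, hvolume, Real.volume_real_Ioc_of_le (by linarith), smul_eq_mul, smul_eq_mul]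
  ring

lemma plateauMean_mem_Icc (θ : ℝ) (k : ℕ) : plateauMean θ k ∈ Set.Icc 0 1 := by
  have hπ := Real.pi_pos
  have hle := intervalIntegral.integral_mono_on (μ := volume) (by linarith : -π ≤ -π + 2 * π)
    ((contDiff_smoothPlateau θ k).continuous.intervalIntegrable _ _)
    (intervalIntegrable_const (c := (1 : ℝ))) fun t _ => (smoothPlateau_mem_Icc θ k t).2
  rw [intervalIntegral.integral_const, smul_eq_mul, mul_one, add_sub_cancel_left] at hle
  refine ⟨mul_nonneg (by positivity) (intervalIntegral.integral_nonneg (by linarith) fun t _ =>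
    (smoothPlateau_mem_Icc θ k t).1), ?_⟩
  rwa [plateauMean, inv_mul_le_one₀ (by positivity)]

lemma tendsto_plateauMean (hθ : θ ∈ Set.Icc (0 : ℝ) 1) :
    Tendsto (plateauMean θ) atTop (𝓝 θ) := by
  have hπ := Real.pi_pos
  have hlim : Tendsto (fun k => ∫ t in -π..-π + 2 * π, smoothPlateau θ k t) atTop
      (𝓝 (∫ t in -π..-π + 2 * π, (Set.Ioo (-(π * θ)) (π * θ)).indicator 1 t)) := by
    refine intervalIntegral.tendsto_integral_filter_of_dominated_convergence (fun _ => 1)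
      (.of_forall fun k => (contDiff_smoothPlateau θ k).continuous.aestronglyMeasurable)
      (.of_forall fun k => .of_forall fun t _ => ?_) intervalIntegrable_const
      (.of_forall fun t ht => tendsto_smoothPlateau hθ ?_)
    · rw [Real.norm_of_nonneg (smoothPlateau_mem_Icc θ k t).1]
      exact (smoothPlateau_mem_Icc θ k t).2
    · rwa [Set.uIoc_of_le (by linarith), show -π + 2 * π = π by ring] at ht
  have hintegral := intervalIntegral_comp_indicator hθ id
  simp only [id_eq, mul_one, mul_zero, add_zero] at hintegral
  rw [hintegral] at hlim
  have hscaled := hlim.const_mul (2 * π)⁻¹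
  rwa [inv_mul_cancel_left₀ Real.two_pi_pos.ne'] at hscaled

lemma contDiff_smoothSawtooth (θ : ℝ) (k : ℕ) : ContDiff ℝ ∞ (smoothSawtooth θ k) :=
  contDiff_integral_zero ((contDiff_smoothPlateau θ k).sub contDiff_const)

lemma deriv_smoothSawtooth (θ : ℝ) (k : ℕ) (t : ℝ) :
    deriv (smoothSawtooth θ k) t = smoothPlateau θ k t - plateauMean θ k :=
  (hasDerivAt_integral_zero ((contDiff_smoothPlateau θ k).sub contDiff_const).continuous t).deriv

lemma periodic_smoothSawtooth (θ : ℝ) (k : ℕ) :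
    Function.Periodic (smoothSawtooth θ k) (2 * π) := by
  have hcont := (contDiff_smoothPlateau θ k).continuous
  refine periodic_integral_zero (a := -π) (hcont.sub continuous_const) (fun t => ?_) ?_
  · rw [periodic_smoothPlateau θ k t]
  · rw [intervalIntegral.integral_sub (hcont.intervalIntegrable _ _) intervalIntegrable_const,
      intervalIntegral.integral_const, plateauMean, add_sub_cancel_left, smul_eq_mul,
      mul_inv_cancel_left₀ Real.two_pi_pos.ne', sub_self]

lemma tendsto_intervalIntegral_deriv_smoothSawtooth (hθ : θ ∈ Set.Icc (0 : ℝ) 1) {h : ℝ → ℝ}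
    (hh : Continuous h) :
    Tendsto (fun k => ∫ t in -π..-π + 2 * π, h (deriv (smoothSawtooth θ k) t)) atTop
      (𝓝 (2 * π * (θ * h (1 - θ) + (1 - θ) * h (-θ)))) := by
  obtain ⟨C, hC⟩ := (isCompact_Icc (a := (-1 : ℝ)) (b := 1)).exists_bound_of_continuousOn
    hh.continuousOn
  rw [← zero_sub θ, ← intervalIntegral_comp_indicator hθ fun s => h (s - θ)]
  simp only [deriv_smoothSawtooth]
  refine intervalIntegral.tendsto_integral_filter_of_dominated_convergence (fun _ => C)
    (.of_forall fun k => ?_) (.of_forall fun k => .of_forall fun t _ => hC _ ?_)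
    intervalIntegrable_const (.of_forall fun t ht => (hh.tendsto _).comp
      ((tendsto_smoothPlateau hθ ?_).sub (tendsto_plateauMean hθ)))
  · exact (hh.comp ((contDiff_smoothPlateau θ k).continuous.sub
      continuous_const)).aestronglyMeasurable
  · obtain ⟨hplateau, hmean⟩ := And.intro (smoothPlateau_mem_Icc θ k t) (plateauMean_mem_Icc θ k)
    constructor <;> linarith [hplateau.1, hplateau.2, hmean.1, hmean.2]
  · rwa [Set.uIoc_of_le (by linarith [Real.pi_pos]), show -π + 2 * π = π by ring] at ht

end Profile

section LaminateUpper

lemma le_laminate_energy {E : Type*} [NormedAddCommGroup E] [NormedSpace ℝ E]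
    [FiniteDimensional ℝ E] [MeasurableSpace E] [BorelSpace E] {μ : Measure E} [IsFiniteMeasure μ]
    {Ω : Opens E} {g : StrongDual ℝ E → ℝ} {B θ : ℝ} (hg : Continuous g) (hμ : ∀ᵐ x ∂μ, x ∈ Ω)
    (hB : ∀ f : 𝓓(Ω, ℝ), B ≤ ∫ x, g (fderiv ℝ f x) ∂μ) (hθ : θ ∈ Set.Icc (0 : ℝ) 1)
    (ℓ : StrongDual ℝ E) :
    B ≤ μ.real Set.univ * (θ * g ((1 - θ) • ℓ) + (1 - θ) * g (-θ • ℓ)) := by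
  have hlim := (tendsto_intervalIntegral_deriv_smoothSawtooth hθ (h := fun s => g (s • ℓ))
    (by fun_prop)).const_mul (μ.real Set.univ)
  have hle := ge_of_tendsto' hlim fun k => period_mul_le_intervalIntegral hg hμ hB
    (contDiff_smoothSawtooth θ k) (periodic_smoothSawtooth θ k) Real.two_pi_pos ℓ (-π)
  rw [mul_left_comm] at hle
  exact le_of_mul_le_mul_left hle Real.two_pi_pos

variable {d : ℕ}

/-- The linear form `y ↦ ⟨ξ, y⟩` on `ℝᵈ`. -/
noncomputable def dotProductCLM (ξ : Fin d → ℝ) : StrongDual ℝ (Fin d → ℝ) :=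
  ∑ i, ξ i • ContinuousLinearMap.proj i

lemma dotProductCLM_single (ξ : Fin d → ℝ) (j : Fin d) :
    dotProductCLM ξ (Pi.single j 1) = ξ j := by
  simp [dotProductCLM, Pi.single_apply]

lemma symJacobian_smul_const {f : (Fin d → ℝ) → ℝ} {x : Fin d → ℝ} (hf : DifferentiableAt ℝ f x)
    (b : Fin d → ℝ) : symJacobian (fun y => f y • b) x =
      symProd b fun j => fderiv ℝ f x (Pi.single j 1) := by
  ext i j
  simp only [symJacobian, symProd, Matrix.of_apply, fderiv_smul_const hf,
    ContinuousLinearMap.smulRight_apply, Pi.smul_apply, smul_eq_mul]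
  ring

lemma le_laminate_energy_symJacobian {Ω : Opens (Fin d → ℝ)}
    (hΩ : volume (Ω : Set (Fin d → ℝ)) ≠ ⊤)
    {W : Matrix (Fin d) (Fin d) ℝ → ℝ} (hW : Continuous W) {B θ : ℝ}
    (hB : ∀ v : 𝓓(Ω, Fin d → ℝ), B ≤ ∫ x in Ω, W (symJacobian v x))
    (hθ : θ ∈ Set.Icc (0 : ℝ) 1) (b ξ : Fin d → ℝ) :
    B ≤ volume.real (Ω : Set (Fin d → ℝ)) *
      (θ * W ((1 - θ) • symProd b ξ) + (1 - θ) * W (-θ • symProd b ξ)) := by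
  have : IsFiniteMeasure (volume.restrict (Ω : Set (Fin d → ℝ))) :=
    isFiniteMeasure_restrict.2 hΩ
  let g : StrongDual ℝ (Fin d → ℝ) → ℝ := fun L => W (symProd b fun j => L (Pi.single j 1))
  have hg : Continuous g := hW.comp ((continuous_symProd b).comp (by fun_prop))
  have hg_smul : ∀ s : ℝ, g (s • dotProductCLM ξ) = W (s • symProd b ξ) := fun s => by
    simp only [g, _root_.smul_apply, dotProductCLM_single, ← symProd_smul]
    rfl
  have hB_scalar : ∀ f : 𝓓(Ω, ℝ), B ≤ ∫ x in Ω, g (fderiv ℝ f x) := fun f => by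
    have hfield := hB (TestFunction.postcompCLM ((ContinuousLinearMap.id ℝ ℝ).smulRight b) f)
    refine hfield.trans_eq (integral_congr_ae (.of_forall fun x => congrArg W ?_))
    exact symJacobian_smul_const (f.contDiff.differentiable (by simp) x) b
  simpa only [hg_smul, measureReal_restrict_apply_univ] using
    le_laminate_energy hg (ae_restrict_mem Ω.isOpen.measurableSet) hB_scalar hθ (dotProductCLM ξ)

end LaminateUpper

section Plancherel

lemma Lp_norm_sq_eq_integral {α E : Type*} [MeasurableSpace α] {μ : Measure α}
    [NormedAddCommGroup E] [InnerProductSpace ℝ E] (f : Lp E 2 μ) :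
    ‖f‖ ^ 2 = ∫ x, ‖f x‖ ^ 2 ∂μ := by
  simp only [← real_inner_self_eq_norm_sq, L2.inner_def]

section EuclideanPlancherel

variable {E : Type*} [NormedAddCommGroup E] [InnerProductSpace ℝ E] [FiniteDimensional ℝ E]
  [MeasurableSpace E] [BorelSpace E]

lemma norm_sq_toLp_sub_smul (S : 𝓢(E, ℂ)) (c : ℂ) (G : Lp ℂ 2 (volume : Measure E)) :
    ‖S.toLp 2 volume - c • G‖ ^ 2 = ∫ x, ‖S x - c * G x‖ ^ 2 := by
  rw [Lp_norm_sq_eq_integral]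
  refine integral_congr_ae ?_
  filter_upwards [Lp.coeFn_sub (S.toLp 2 volume) (c • G), Lp.coeFn_smul c G,
    S.coeFn_toLp 2 volume] with x hsub hsmul htoLp
  rw [hsub, Pi.sub_apply, hsmul, htoLp, Pi.smul_apply, smul_eq_mul]

lemma integral_norm_fourier_sub_sq (S : 𝓢(E, ℂ)) (c : ℂ) (G : Lp ℂ 2 (volume : Measure E)) :
    ∫ k, ‖𝓕 S k - c * 𝓕 G k‖ ^ 2 = ∫ x, ‖S x - c * G x‖ ^ 2 := by
  have hlinear : 𝓕 (S.toLp 2 volume - c • G) = (𝓕 S).toLp 2 volume - c • 𝓕 G := by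
    rw [← SchwartzMap.toLp_fourier_eq]
    exact (map_sub (Lp.fourierTransformₗᵢ E ℂ) _ _).trans
      (congrArg _ (map_smul (Lp.fourierTransformₗᵢ E ℂ) c G))
  rw [← norm_sq_toLp_sub_smul, ← hlinear, Lp.norm_fourier_eq, norm_sq_toLp_sub_smul]

lemma integrable_norm_sub_mul_sq (S : 𝓢(E, ℂ)) (c : ℂ) (G : Lp ℂ 2 (volume : Measure E)) :
    Integrable fun x => ‖S x - c * G x‖ ^ 2 :=
  ((S.memLp 2).sub ((Lp.memLp G).const_mul c)).integrable_norm_pow two_ne_zero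

end EuclideanPlancherel

variable {d : ℕ}

/-- The symmetrized gradient `(∂ⱼ Vᵢ + ∂ᵢ Vⱼ) / 2` of a complex Schwartz vector field `V` on
Euclidean space, the setting in which Plancherel's theorem is available. -/
noncomputable def schwartzSymGrad (V : Fin d → 𝓢(EuclideanSpace ℝ (Fin d), ℂ)) (i j : Fin d) :
    𝓢(EuclideanSpace ℝ (Fin d), ℂ) :=
  (1 / 2 : ℂ) • (∂_{EuclideanSpace.single j (1 : ℝ)} (V i) +
    ∂_{EuclideanSpace.single i (1 : ℝ)} (V j))

lemma fourier_schwartzSymGrad_apply (V : Fin d → 𝓢(EuclideanSpace ℝ (Fin d), ℂ)) (i j : Fin d)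
    (k : EuclideanSpace ℝ (Fin d)) :
    𝓕 (schwartzSymGrad V i j) k =
      (2 * π * Complex.I * 𝓕 (V i) k * k j + 2 * π * Complex.I * 𝓕 (V j) k * k i) / 2 := by
  have htemperate (m : EuclideanSpace ℝ (Fin d)) :
      (inner ℝ · m).HasTemperateGrowth := by fun_prop
  rw [schwartzSymGrad, FourierTransform.fourier_smul, FourierTransform.fourier_add,
    SchwartzMap.fourier_lineDerivOp_eq, SchwartzMap.fourier_lineDerivOp_eq]
  simp only [_root_.smul_apply, _root_.add_apply,
    SchwartzMap.smulLeftCLM_apply_apply (htemperate _)]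
  simp [EuclideanSpace.inner_single_right]
  ring

variable {a : Matrix (Fin d) (Fin d) ℝ} {H : ℝ}

lemma mul_integral_norm_sq_le_sum_schwartzSymGrad (ha : a.IsSymm)
    (hH : IsLeast {h | ∃ ξ : Fin d → ℝ, ∑ i, ξ i ^ 2 = 1 ∧ h = rankOneDistSq a ξ} H)
    (V : Fin d → 𝓢(EuclideanSpace ℝ (Fin d), ℂ))
    (G : Lp ℂ 2 (volume : Measure (EuclideanSpace ℝ (Fin d)))) :
    H * ∫ x, ‖G x‖ ^ 2 ≤ ∑ i, ∑ j, ∫ x, ‖schwartzSymGrad V i j x - a i j * G x‖ ^ 2 := by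
  have hint (i j : Fin d) := integrable_norm_sub_mul_sq (𝓕 (schwartzSymGrad V i j)) (a i j) (𝓕 G)
  calc H * ∫ x, ‖G x‖ ^ 2 = ∫ k, H * ‖𝓕 G k‖ ^ 2 := by
        rw [integral_const_mul, ← Lp_norm_sq_eq_integral, ← Lp_norm_sq_eq_integral,
          Lp.norm_fourier_eq]
    _ ≤ ∫ k, ∑ i, ∑ j, ‖𝓕 (schwartzSymGrad V i j) k - a i j * 𝓕 G k‖ ^ 2 := by
        refine integral_mono (((Lp.memLp (𝓕 G)).integrable_norm_pow two_ne_zero).const_mul H)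
          (integrable_finsetSum _ fun i _ => integrable_finsetSum _ fun j _ => hint i j)
          fun k => ?_
        simp only [fourier_schwartzSymGrad_apply]
        exact mul_norm_sq_le_sum_complex ha hH (fun i => 2 * π * Complex.I * 𝓕 (V i) k) k (𝓕 G k)
    _ = ∑ i, ∑ j, ∫ k, ‖𝓕 (schwartzSymGrad V i j) k - a i j * 𝓕 G k‖ ^ 2 := by
        rw [integral_finsetSum _ fun i _ => integrable_finsetSum _ fun j _ => hint i j]
        exact Finset.sum_congr rfl fun i _ => integral_finsetSum _ fun j _ => hint i j
    _ = ∑ i, ∑ j, ∫ x, ‖schwartzSymGrad V i j x - a i j * G x‖ ^ 2 := by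
        simp only [integral_norm_fourier_sub_sq]

end Plancherel

section SymJacobian

variable {d : ℕ} {v : (Fin d → ℝ) → Fin d → ℝ}

lemma integral_fderiv_apply_eq_zero {E F : Type*} [NormedAddCommGroup E] [NormedSpace ℝ E]
    [FiniteDimensional ℝ E] [MeasurableSpace E] [BorelSpace E] {μ : Measure E} [μ.IsAddHaarMeasure]
    [NormedAddCommGroup F] [NormedSpace ℝ F] {g : E → F} (hg : ContDiff ℝ 1 g)
    (hg_supp : HasCompactSupport g) (w : E) : ∫ x, fderiv ℝ g x w ∂μ = 0 := by
  have hderiv : Integrable (fun x => fderiv ℝ g x w) μ :=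
    ((hg.continuous_fderiv one_ne_zero).clm_apply
      continuous_const).integrable_of_hasCompactSupport (hg_supp.fderiv_apply ℝ w)
  simpa using integral_smul_fderiv_eq_neg_fderiv_smul_of_integrable (𝕜 := ℝ) (μ := μ)
    (f := fun _ : E => (1 : ℝ)) (v := w) (by simp) (by simpa using hderiv)
    (by simpa using hg.continuous.integrable_of_hasCompactSupport hg_supp)
    (fun x _ => differentiableAt_const _) (fun x _ => hg.differentiable one_ne_zero x)

lemma continuous_symJacobian (hv : ContDiff ℝ 1 v) : Continuous (symJacobian v) := by
  have hderiv (w : Fin d → ℝ) : Continuous fun x => fderiv ℝ v x w :=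
    (hv.continuous_fderiv one_ne_zero).clm_apply continuous_const
  exact continuous_matrix fun i j =>
    (((continuous_apply i).comp (hderiv _)).add ((continuous_apply j).comp (hderiv _))).div_const 2

lemma symJacobian_eq_zero {x : Fin d → ℝ} (hx : x ∉ tsupport v) : symJacobian v x = 0 := by
  ext i j
  simp [symJacobian, image_eq_zero_of_notMem_tsupport (mt (tsupport_fderiv_subset ℝ ·) hx)]

lemma memLp_symJacobian_apply (hv : ContDiff ℝ 1 v) (hv_supp : HasCompactSupport v)
    (p : ENNReal) (i j : Fin d) : MemLp (fun x => symJacobian v x i j) p :=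
  ((continuous_symJacobian hv).matrix_elem i j).memLp_of_hasCompactSupport <|
    HasCompactSupport.intro hv_supp fun x hx => by rw [symJacobian_eq_zero hx, Matrix.zero_apply]

lemma memLp_symJacobian_sub_smul_apply (hv : ContDiff ℝ 1 v) (hv_supp : HasCompactSupport v)
    {p : ENNReal} {f : (Fin d → ℝ) → ℝ} (hf : MemLp f p) (a : Matrix (Fin d) (Fin d) ℝ)
    (i j : Fin d) : MemLp (fun x => (symJacobian v x - f x • a) i j) p :=
  (memLp_symJacobian_apply hv hv_supp p i j).sub (hf.mul_const (a i j))

lemma integral_symJacobian_apply (hv : ContDiff ℝ 1 v) (hv_supp : HasCompactSupport v)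
    (i j : Fin d) : ∫ x, symJacobian v x i j = 0 := by
  have hderiv (w : Fin d → ℝ) : Integrable fun x => fderiv ℝ v x w :=
    ((hv.continuous_fderiv one_ne_zero).clm_apply
      continuous_const).integrable_of_hasCompactSupport (hv_supp.fderiv_apply ℝ w)
  have hzero (w : Fin d → ℝ) (i : Fin d) : ∫ x, fderiv ℝ v x w i = 0 := by
    rw [← eval_integral fun i => (hderiv w).eval i, integral_fderiv_apply_eq_zero hv hv_supp,
      Pi.zero_apply]
  simp only [symJacobian, Matrix.of_apply]
  rw [integral_div, integral_add ((hderiv _).eval i) ((hderiv _).eval j), hzero, hzero]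
  simp

lemma integral_symJacobian_sub_smul_apply (hv : ContDiff ℝ 1 v) (hv_supp : HasCompactSupport v)
    {f : (Fin d → ℝ) → ℝ} (hf : Integrable f) (hf_mean : ∫ x, f x = 0)
    (a : Matrix (Fin d) (Fin d) ℝ) (i j : Fin d) :
    ∫ x, (symJacobian v x - f x • a) i j = 0 := by
  have hint := memLp_one_iff_integrable.1 (memLp_symJacobian_apply hv hv_supp 1 i j)
  simp only [Matrix.sub_apply, Matrix.smul_apply, smul_eq_mul]
  rw [integral_sub hint (hf.mul_const _), integral_mul_const,
    integral_symJacobian_apply hv hv_supp, hf_mean, zero_mul, sub_zero]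

lemma exists_schwartzSymGrad_eq_symJacobian (hv : ContDiff ℝ ∞ v)
    (hv_supp : HasCompactSupport v) :
    ∃ V : Fin d → 𝓢(EuclideanSpace ℝ (Fin d), ℂ), ∀ i j x,
      schwartzSymGrad V i j x = (symJacobian v (EuclideanSpace.equiv (Fin d) ℝ x) i j : ℂ) := by
  set e := EuclideanSpace.equiv (Fin d) ℝ
  let L (i : Fin d) : (Fin d → ℝ) →L[ℝ] ℂ := Complex.ofRealCLM ∘L ContinuousLinearMap.proj i
  have hV (i : Fin d) : ContDiff ℝ ∞ fun x => L i (v (e x)) :=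
    (L i).contDiff.comp (hv.comp e.contDiff)
  have hV_supp (i : Fin d) : HasCompactSupport fun x => L i (v (e x)) :=
    (hv_supp.comp_homeomorph e.toHomeomorph).comp_left (g := L i) (map_zero _)
  have hderiv (i j : Fin d) (x : EuclideanSpace ℝ (Fin d)) :
      ∂_{EuclideanSpace.single j (1 : ℝ)} ((hV_supp i).toSchwartzMap (hV i)) x =
        (fderiv ℝ v (e x) (Pi.single j 1) i : ℂ) := by
    have hchain : HasFDerivAt (fun x => L i (v (e x)))
        (L i ∘L fderiv ℝ v (e x) ∘L (e : EuclideanSpace ℝ (Fin d) →L[ℝ] Fin d → ℝ)) x :=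
      (L i).hasFDerivAt.comp x
        ((hv.differentiable (by simp) (e x)).hasFDerivAt.comp x e.hasFDerivAt)
    rw [SchwartzMap.lineDerivOp_apply_eq_fderiv]
    exact DFunLike.congr_fun hchain.fderiv (EuclideanSpace.single j 1)
  refine ⟨fun i => (hV_supp i).toSchwartzMap (hV i), fun i j x => ?_⟩
  calc schwartzSymGrad (fun i => (hV_supp i).toSchwartzMap (hV i)) i j x
    _ = (1 / 2 : ℂ) * (fderiv ℝ v (e x) (Pi.single j 1) i + fderiv ℝ v (e x) (Pi.single i 1) j) :=
        by rw [← hderiv, ← hderiv]; rfl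
    _ = (symJacobian v (e x) i j : ℂ) := by
        simp only [symJacobian, Matrix.of_apply]
        push_cast
        ring

lemma integral_frob2 {α : Type*} [MeasurableSpace α] {μ : Measure α}
    {R : α → Matrix (Fin d) (Fin d) ℝ} (hR : ∀ i j, MemLp (fun x => R x i j) 2 μ) :
    ∫ x, frob2 (R x) ∂μ = ∑ i, ∑ j, ∫ x, R x i j ^ 2 ∂μ := by
  simp only [frob2]
  rw [integral_finsetSum _ fun i _ => integrable_finsetSum _ fun j _ => (hR i j).integrable_sq]
  exact Finset.sum_congr rfl fun i _ => integral_finsetSum _ fun j _ => (hR i j).integrable_sq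

lemma mul_integral_sq_le_integral_frob2 {a : Matrix (Fin d) (Fin d) ℝ} {H : ℝ} (ha : a.IsSymm)
    (hH : IsLeast {h | ∃ ξ : Fin d → ℝ, ∑ i, ξ i ^ 2 = 1 ∧ h = rankOneDistSq a ξ} H)
    (hv : ContDiff ℝ ∞ v) (hv_supp : HasCompactSupport v) {f : (Fin d → ℝ) → ℝ}
    (hf : MemLp f 2) :
    H * ∫ x, f x ^ 2 ≤ ∫ x, frob2 (symJacobian v x - f x • a) := by
  set e := EuclideanSpace.equiv (Fin d) ℝ
  have he : MeasurePreserving e := PiLp.volume_preserving_ofLp (Fin d)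
  have he_emb : MeasurableEmbedding e := e.toHomeomorph.measurableEmbedding
  have hG : MemLp (fun x => (f (e x) : ℂ)) 2 := (hf.comp_measurePreserving he).ofReal
  obtain ⟨V, hV⟩ := exists_schwartzSymGrad_eq_symJacobian hv hv_supp
  have hcomp (g : (Fin d → ℝ) → ℝ) : ∫ x, g (e x) = ∫ x, g x := he.integral_comp he_emb g
  have hG_norm : ∫ x, ‖hG.toLp _ x‖ ^ 2 = ∫ x, f x ^ 2 := by
    rw [← hcomp]
    refine integral_congr_ae ?_
    filter_upwards [hG.coeFn_toLp] with x hx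
    rw [hx, Complex.norm_real, Real.norm_eq_abs, sq_abs]
  have hentry (i j : Fin d) : ∫ x, ‖schwartzSymGrad V i j x - a i j * hG.toLp _ x‖ ^ 2 =
      ∫ x, (symJacobian v x - f x • a) i j ^ 2 := by
    rw [← hcomp]
    refine integral_congr_ae ?_
    filter_upwards [hG.coeFn_toLp] with x hx
    rw [hx, hV, mul_comm, ← Complex.ofReal_mul, ← Complex.ofReal_sub, Complex.norm_real,
      Real.norm_eq_abs, sq_abs]
    rfl
  rw [integral_frob2 (memLp_symJacobian_sub_smul_apply (hv.of_le (by simp)) hv_supp hf a)]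
  simpa only [hG_norm, hentry] using mul_integral_norm_sq_le_sum_schwartzSymGrad ha hH V (hG.toLp _)

end SymJacobian

section PhaseFluctuation

variable {α : Type*} [MeasurableSpace α] {μ : Measure α}

lemma integral_const_add_sq [IsFiniteMeasure μ] {r : α → ℝ} (hr : MemLp r 2 μ)
    (hr_mean : ∫ x, r x ∂μ = 0) (c : ℝ) :
    ∫ x, (c + r x) ^ 2 ∂μ = μ.real Set.univ * c ^ 2 + ∫ x, r x ^ 2 ∂μ := by
  have hr_int : Integrable (fun x => 2 * c * r x) μ := (hr.integrable one_le_two).const_mul _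
  simp only [add_sq]
  rw [integral_add (by fun_prop) hr.integrable_sq, integral_add (by fun_prop) hr_int,
    integral_const_mul, hr_mean, mul_zero, add_zero, integral_const, smul_eq_mul]

lemma integral_frob2_add {d : ℕ} [IsFiniteMeasure μ] {R : α → Matrix (Fin d) (Fin d) ℝ}
    (hR : ∀ i j, MemLp (fun x => R x i j) 2 μ) (hR_mean : ∀ i j, ∫ x, R x i j ∂μ = 0)
    (D : Matrix (Fin d) (Fin d) ℝ) :
    ∫ x, frob2 (D + R x) ∂μ = μ.real Set.univ * frob2 D + ∫ x, frob2 (R x) ∂μ := by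
  have hDR (i j : Fin d) : MemLp (fun x => (D + R x) i j) 2 μ :=
    (memLp_const (D i j)).add (hR i j)
  rw [integral_frob2 hR, integral_frob2 hDR, frob2]
  simp only [Matrix.add_apply, integral_const_add_sq (hR _ _) (hR_mean _ _),
    Finset.sum_add_distrib, Finset.mul_sum]

lemma setIntegral_frob2_add {d : ℕ} {Ω : Set α} {R : α → Matrix (Fin d) (Fin d) ℝ}
    (hΩ_fin : μ Ω ≠ ⊤) (hR : ∀ i j, MemLp (fun x => R x i j) 2 μ)
    (hR_mean : ∀ i j, ∫ x, R x i j ∂μ = 0) (hR_zero : ∀ x ∉ Ω, R x = 0)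
    (D : Matrix (Fin d) (Fin d) ℝ) :
    ∫ x in Ω, frob2 (D + R x) ∂μ = μ.real Ω * frob2 D + ∫ x, frob2 (R x) ∂μ := by
  have : IsFiniteMeasure (μ.restrict Ω) := isFiniteMeasure_restrict.2 hΩ_fin
  have hR_mean' (i j : Fin d) : ∫ x in Ω, R x i j ∂μ = 0 := by
    rw [setIntegral_eq_integral_of_forall_compl_eq_zero fun x hx => by rw [hR_zero x hx]; rfl,
      hR_mean]
  rw [integral_frob2_add (fun i j => (hR i j).restrict Ω) hR_mean', measureReal_restrict_apply_univ,
    setIntegral_eq_integral_of_forall_compl_eq_zero fun x hx => by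
      rw [hR_zero x hx]; simp [frob2]]

/-- The deviation of the indicator of a phase `S ⊆ Ω` from its mean over `Ω`, extended by zero
outside `Ω`. -/
noncomputable def phaseFluctuation (μ : Measure α) (Ω S : Set α) (x : α) : ℝ :=
  S.indicator 1 x - Ω.indicator (fun _ => μ.real S / μ.real Ω) x

variable {Ω S : Set α}

lemma memLp_phaseFluctuation (hΩ : MeasurableSet Ω) (hS : MeasurableSet S) (hΩ_fin : μ Ω ≠ ⊤)
    (hS_fin : μ S ≠ ⊤) (p : ENNReal) : MemLp (phaseFluctuation μ Ω S) p μ :=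
  (memLp_indicator_const p hS 1 (.inr hS_fin)).sub (memLp_indicator_const p hΩ _ (.inr hΩ_fin))

lemma volumeFraction_mul (hSΩ : S ⊆ Ω) (hΩ_fin : μ Ω ≠ ⊤) :
    μ.real S / μ.real Ω * μ.real Ω = μ.real S :=
  div_mul_cancel_of_imp fun h => measureReal_mono_null hSΩ h hΩ_fin

lemma integral_phaseFluctuation (hΩ : MeasurableSet Ω) (hS : MeasurableSet S) (hSΩ : S ⊆ Ω)
    (hΩ_fin : μ Ω ≠ ⊤) : ∫ x, phaseFluctuation μ Ω S x ∂μ = 0 := by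
  have hS_fin := measure_ne_top_of_subset hSΩ hΩ_fin
  simp only [phaseFluctuation]
  rw [integral_sub ((integrable_indicator_iff hS).2 (integrableOn_const hS_fin))
    ((integrable_indicator_iff hΩ).2 (integrableOn_const hΩ_fin)), integral_indicator_one hS,
    integral_indicator_const _ hΩ, smul_eq_mul, mul_comm, volumeFraction_mul hSΩ hΩ_fin, sub_self]

lemma integral_phaseFluctuation_sq (hΩ : MeasurableSet Ω) (hS : MeasurableSet S) (hSΩ : S ⊆ Ω)
    (hΩ_fin : μ Ω ≠ ⊤) :
    ∫ x, phaseFluctuation μ Ω S x ^ 2 ∂μ =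
      μ.real Ω * (μ.real S / μ.real Ω * (1 - μ.real S / μ.real Ω)) := by
  have hS_fin := measure_ne_top_of_subset hSΩ hΩ_fin
  set θ := μ.real S / μ.real Ω with hθ
  have hsq (x : α) : phaseFluctuation μ Ω S x ^ 2 =
      S.indicator (fun _ => 1 - 2 * θ) x + Ω.indicator (fun _ => θ ^ 2) x := by
    by_cases hxS : x ∈ S
    · simp [phaseFluctuation, hxS, hSΩ hxS, ← hθ]
      ring
    · by_cases hxΩ : x ∈ Ω <;> simp [phaseFluctuation, hxS, hxΩ, ← hθ]
  simp only [hsq]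
  rw [integral_add ((integrable_indicator_iff hS).2 (integrableOn_const hS_fin))
    ((integrable_indicator_iff hΩ).2 (integrableOn_const hΩ_fin)), integral_indicator_const _ hS,
    integral_indicator_const _ hΩ, ← volumeFraction_mul hSΩ hΩ_fin, smul_eq_mul, smul_eq_mul]
  ring

end PhaseFluctuation

section TwoWell

variable {d : ℕ} {F a₀ a₁ : Matrix (Fin d) (Fin d) ℝ} {H M θ : ℝ}

/-- The squared Frobenius distance of `A` to the two wells `{a₀, a₁}`. -/
def wellDistSq (a₀ a₁ A : Matrix (Fin d) (Fin d) ℝ) : ℝ :=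
  min (frob2 (A - a₀)) (frob2 (A - a₁))

lemma continuous_wellDistSq (a₀ a₁ : Matrix (Fin d) (Fin d) ℝ) :
    Continuous (wellDistSq a₀ a₁) :=
  (continuous_frob2.comp (by fun_prop)).min (continuous_frob2.comp (by fun_prop))

lemma laminate_wellDistSq_le (ha : (a₁ - a₀).IsSymm) (hθ : θ ∈ Set.Icc (0 : ℝ) 1)
    {ξ : Fin d → ℝ} (hξ : ∑ i, ξ i ^ 2 = 1) {P : Matrix (Fin d) (Fin d) ℝ}
    (hP : P = symProd (bestAmplitude (a₁ - a₀) ξ) ξ) :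
    θ * wellDistSq a₀ a₁ (F + (1 - θ) • P) + (1 - θ) * wellDistSq a₀ a₁ (F + -θ • P) ≤
      frob2 (F - ((1 - θ) • a₀ + θ • a₁)) + θ * (1 - θ) * rankOneDistSq (a₁ - a₀) ξ := by
  rw [← frob2_symProd_bestAmplitude_sub ha hξ, ← hP, ← laminate_frob2_eq]
  exact add_le_add (mul_le_mul_of_nonneg_left (min_le_right _ _) hθ.1)
    (mul_le_mul_of_nonneg_left (min_le_left _ _) (sub_nonneg.2 hθ.2))

variable {Ω : Opens (Fin d → ℝ)}

lemma phase_energy_lower_bound (hΩ : volume (Ω : Set (Fin d → ℝ)) ≠ ⊤) {S : Set (Fin d → ℝ)}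
    (hS : MeasurableSet S) (hSΩ : S ⊆ Ω) (ha : (a₁ - a₀).IsSymm)
    (hH : IsLeast {h | ∃ ξ : Fin d → ℝ, ∑ i, ξ i ^ 2 = 1 ∧ h = rankOneDistSq (a₁ - a₀) ξ} H)
    (v : 𝓓(Ω, Fin d → ℝ))
    (hθ : θ = volume.real S / volume.real (Ω : Set (Fin d → ℝ))) :
    volume.real (Ω : Set (Fin d → ℝ)) *
        (frob2 (F - ((1 - θ) • a₀ + θ • a₁)) + θ * (1 - θ) * H) ≤
      ∫ x in Ω, frob2 (F + symJacobian v x - (a₀ + S.indicator (fun _ => a₁ - a₀) x)) := by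
  have hv : ContDiff ℝ 1 v := v.contDiff.of_le (by simp)
  have hΩ_meas := Ω.isOpen.measurableSet
  let f := phaseFluctuation volume (Ω : Set (Fin d → ℝ)) S
  let D := F - ((1 - θ) • a₀ + θ • a₁)
  let R x := symJacobian v x - f x • (a₁ - a₀)
  have hf (p : ENNReal) : MemLp f p :=
    memLp_phaseFluctuation hΩ_meas hS hΩ (measure_ne_top_of_subset hSΩ hΩ) p
  have hR_zero : ∀ x ∉ (Ω : Set (Fin d → ℝ)), R x = 0 := fun x hx => by
    simp [R, f, phaseFluctuation, hx, mt (hSΩ ·) hx,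
      symJacobian_eq_zero (mt (v.tsupport_subset ·) hx)]
  have hdecomp : ∀ x ∈ (Ω : Set (Fin d → ℝ)),
      F + symJacobian v x - (a₀ + S.indicator (fun _ => a₁ - a₀) x) = D + R x := fun x hx => by
    by_cases hxS : x ∈ S <;> simp [D, R, f, phaseFluctuation, hx, hxS, ← hθ] <;> module
  calc _ = volume.real (Ω : Set (Fin d → ℝ)) * frob2 D + H * ∫ x, f x ^ 2 := by
        rw [integral_phaseFluctuation_sq hΩ_meas hS hSΩ hΩ, ← hθ]
        ring
    _ ≤ volume.real (Ω : Set (Fin d → ℝ)) * frob2 D + ∫ x, frob2 (R x) := by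
        gcongr
        exact mul_integral_sq_le_integral_frob2 ha hH v.contDiff v.hasCompactSupport (hf 2)
    _ = ∫ x in Ω, frob2 (D + R x) := (setIntegral_frob2_add hΩ
        (memLp_symJacobian_sub_smul_apply hv v.hasCompactSupport (hf 2) _)
        (integral_symJacobian_sub_smul_apply hv v.hasCompactSupport
          (memLp_one_iff_integrable.1 (hf 1)) (integral_phaseFluctuation hΩ_meas hS hSΩ hΩ) _)
        hR_zero D).symm
    _ = _ := setIntegral_congr_fun hΩ_meas fun x hx => congrArg frob2 (hdecomp x hx).symm

lemma mul_le_energy (hΩ : volume (Ω : Set (Fin d → ℝ)) ≠ ⊤) (ha : (a₁ - a₀).IsSymm)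
    (hH : IsLeast {h | ∃ ξ : Fin d → ℝ, ∑ i, ξ i ^ 2 = 1 ∧ h = rankOneDistSq (a₁ - a₀) ξ} H)
    (hM : IsLeast {m : ℝ | ∃ θ ∈ Set.Icc (0 : ℝ) 1,
      m = frob2 (F - ((1 - θ) • a₀ + θ • a₁)) + θ * (1 - θ) * H} M)
    (v : 𝓓(Ω, Fin d → ℝ)) :
    volume.real (Ω : Set (Fin d → ℝ)) * M ≤
      ∫ x in Ω, wellDistSq a₀ a₁ (F + symJacobian v x) := by
  have hcont (b : Matrix (Fin d) (Fin d) ℝ) : Continuous fun x => frob2 (F + symJacobian v x - b) :=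
    continuous_frob2.comp ((continuous_const.add
      (continuous_symJacobian (v.contDiff.of_le (by simp)))).sub continuous_const)
  let S := (Ω : Set (Fin d → ℝ)) ∩
    {x | frob2 (F + symJacobian v x - a₁) < frob2 (F + symJacobian v x - a₀)}
  have hSΩ : S ⊆ Ω := Set.inter_subset_left
  have hS : MeasurableSet S := (Ω.isOpen.inter (isOpen_lt (hcont a₁) (hcont a₀))).measurableSet
  have hθ : volume.real S / volume.real (Ω : Set (Fin d → ℝ)) ∈ Set.Icc (0 : ℝ) 1 :=
    ⟨by positivity, div_le_one_of_le₀ (measureReal_mono hSΩ hΩ) measureReal_nonneg⟩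
  refine (mul_le_mul_of_nonneg_left (hM.2 ⟨_, hθ, rfl⟩) measureReal_nonneg).trans
    ((phase_energy_lower_bound hΩ hS hSΩ ha hH v rfl).trans_eq ?_)
  refine setIntegral_congr_fun Ω.isOpen.measurableSet fun x hx => ?_
  by_cases hcloser : frob2 (F + symJacobian v x - a₁) < frob2 (F + symJacobian v x - a₀)
  · have hxS : x ∈ S := ⟨hx, hcloser⟩
    simp [wellDistSq, hxS, hcloser.le]
  · have hxS : x ∉ S := fun h => hcloser h.2
    simp [wellDistSq, hxS, not_lt.1 hcloser]

lemma isGLB_energy (hΩ : volume (Ω : Set (Fin d → ℝ)) ≠ ⊤) (ha : (a₁ - a₀).IsSymm)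
    (hH : IsLeast {h | ∃ ξ : Fin d → ℝ, ∑ i, ξ i ^ 2 = 1 ∧ h = rankOneDistSq (a₁ - a₀) ξ} H)
    (hM : IsLeast {m : ℝ | ∃ θ ∈ Set.Icc (0 : ℝ) 1,
      m = frob2 (F - ((1 - θ) • a₀ + θ • a₁)) + θ * (1 - θ) * H} M) :
    IsGLB (Set.range fun v : 𝓓(Ω, Fin d → ℝ) =>
        ∫ x in Ω, wellDistSq a₀ a₁ (F + symJacobian v x))
      (volume.real (Ω : Set (Fin d → ℝ)) * M) := by
  refine ⟨Set.forall_mem_range.2 (mul_le_energy hΩ ha hH hM), fun B hB => ?_⟩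
  obtain ⟨⟨ξ, hξ, rfl⟩, -⟩ := hH
  obtain ⟨⟨θ, hθ, rfl⟩, -⟩ := hM
  have hlaminate := le_laminate_energy_symJacobian hΩ (W := fun A => wellDistSq a₀ a₁ (F + A))
    ((continuous_wellDistSq a₀ a₁).comp (by fun_prop)) (Set.forall_mem_range.1 hB) hθ
    (bestAmplitude (a₁ - a₀) ξ) ξ
  exact hlaminate.trans
    (mul_le_mul_of_nonneg_left (laminate_wellDistSq_le ha hθ hξ rfl) measureReal_nonneg)

lemma setOf_smooth_energy_eq_range (Ω : Opens (Fin d → ℝ))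
    (J : ((Fin d → ℝ) → Fin d → ℝ) → ℝ) :
    {e | ∃ v : (Fin d → ℝ) → Fin d → ℝ, ContDiff ℝ ∞ v ∧ HasCompactSupport v ∧
      tsupport v ⊆ Ω ∧ e = J v} = Set.range fun v : 𝓓(Ω, Fin d → ℝ) => J v := by
  ext e
  constructor
  · rintro ⟨v, hv, hv_supp, hvΩ, rfl⟩
    exact ⟨⟨v, hv, hv_supp, hvΩ⟩, rfl⟩
  · rintro ⟨v, rfl⟩
    exact ⟨v, v.contDiff, v.hasCompactSupport, v.tsupport_subset, rfl⟩

end TwoWell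

theorem statement1_general {d : ℕ} [NeZero d] {Ω : Set (Fin d → ℝ)} (hΩ_open : IsOpen Ω)
    (hΩ_fin : volume Ω ≠ ⊤) (F : Matrix (Fin d) (Fin d) ℝ) {a₀ a₁ : Matrix (Fin d) (Fin d) ℝ}
    (ha : (a₁ - a₀).IsSymm) :
    ∃ H M : ℝ,
      IsLeast {h : ℝ | ∃ ξ : Fin d → ℝ, ∑ i, ξ i ^ 2 = 1 ∧ h = rankOneDistSq (a₁ - a₀) ξ} H ∧
      IsLeast {m : ℝ | ∃ θ ∈ Set.Icc (0 : ℝ) 1,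
        m = frob2 (F - ((1 - θ) • a₀ + θ • a₁)) + θ * (1 - θ) * H} M ∧
      sInf {e : ℝ | ∃ v : (Fin d → ℝ) → (Fin d → ℝ),
          ContDiff ℝ ∞ v ∧ HasCompactSupport v ∧ tsupport v ⊆ Ω ∧
          e = ∫ x in Ω, wellDistSq a₀ a₁ (F + symJacobian v x)} =
        (volume Ω).toReal * M := by
  obtain ⟨H, hH⟩ := exists_isLeast_rankOneDistSq (a₁ - a₀)
  obtain ⟨M, hM⟩ := exists_isLeast_laminate F a₀ a₁ H
  refine ⟨H, M, hH, hM, ?_⟩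
  exact (congrArg sInf (setOf_smooth_energy_eq_range ⟨Ω, hΩ_open⟩ _)).trans <|
    (isGLB_energy (Ω := ⟨Ω, hΩ_open⟩) hΩ_fin ha hH hM).csInf_eq (Set.range_nonempty _)

/-- Relaxation formula for the geometrically linear (symmetrized gradient) two-well energy. -/
theorem statement1
    (d : ℕ) (hd : 2 ≤ d)
    (Ω : Set (Fin d → ℝ)) (hΩopen : IsOpen Ω) (hΩne : Ω.Nonempty)
    (hΩbdd : Bornology.IsBounded Ω)
    (F a₀ a₁ : Matrix (Fin d) (Fin d) ℝ)
    (hF : F.IsSymm) (ha₀ : a₀.IsSymm) (ha₁ : a₁.IsSymm) (hwells : a₀ ≠ a₁) :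
    ∃ H M : ℝ,
      -- `H = min_{ξ ∈ S^{d-1}} (‖a‖² - 2‖aξ‖² + ⟨aξ,ξ⟩²)`, attained
      IsLeast {h : ℝ | ∃ ξ : Fin d → ℝ, (∑ i, ξ i ^ 2) = 1 ∧
        h = frob2 (a₁ - a₀) - 2 * (∑ i, ((a₁ - a₀).mulVec ξ i) ^ 2)
            + (∑ i, (a₁ - a₀).mulVec ξ i * ξ i) ^ 2} H ∧
      -- `M = min_{θ ∈ [0,1]} (‖F - a_θ‖² + θ(1-θ) H)`, attained
      IsLeast {m : ℝ | ∃ θ ∈ Set.Icc (0 : ℝ) 1,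
        m = frob2 (F - ((1 - θ) • a₀ + θ • a₁)) + θ * (1 - θ) * H} M ∧
      -- the infimum of the elastic energy over test fields equals `|Ω| * M`
      sInf {e : ℝ | ∃ v : (Fin d → ℝ) → (Fin d → ℝ),
          ContDiff ℝ (⊤ : ℕ∞) v ∧ HasCompactSupport v ∧ tsupport v ⊆ Ω ∧
          e = ∫ x in Ω,
            min (frob2 (F + symJacobian v x - a₀)) (frob2 (F + symJacobian v x - a₁))}
        = (volume Ω).toReal * M := by
  have : NeZero d := ⟨by omega⟩
  exact statement1_general hΩopen hΩbdd.measure_lt_top.ne F (ha₁.sub ha₀)
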